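/- arXiv:1106.3500 — 3 statements merged into one kernel-verified Lean document; each statement's English description precedes it below -/
import Mathlib

section
/- For every n ≥ 1, k ≥ 1, and d = binom(2n-1+k, k) (the dimension of the space of real homogeneous polynomials of degree k in 2n variables), the set G_k = { (σ_1, …, σ_d) ∈ Sp(n)^d : (F∘σ_1, …, F∘σ_d) is a basis of the space of real homogeneous polynomials of degree k in the 2n variables (x_1,…,x_n,y_1,…,y_n) } is open and dense in Sp(n)^d, where Sp(n)^d carries the product of the subspace topologies induced from the space of 2n×2n real matrices. -/
/-!
Since `F ∘ σ` is the `k`-th power of the linear form given by the first row `r` of `σ`, its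
coefficients are `multinomial(m) · r ^ m` (`veronese`). As `d` is the dimension of the space of
degree-`k` forms, `σ ∈ G_k` iff these `d` coefficient vectors are linearly independent
(`mem_GkSet_iff`), which is an open condition.

For density, the members of the tuple are perturbed one at a time, each avoiding the span of the
earlier ones (`exists_linearIndependent_of_span`). This is possible if, near any symplectic `σ`, the
coefficient vectors span everything (`span_veronese_near`). A functional killing them is a
polynomial `p` in the row (`veroneseDual`), nonzero if the functional is, that vanishes at the rows of all symplectic matrices near `σ`. Multiplying `σ` by transvections replaces `r` by
`r + t ω(r, v) v`; `p` vanishes for small `t`, hence for all `t`, hence (taking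
`t = 1 / ω(r, v)`) at every `r + v` with `ω(r, v) ≠ 0`, and therefore everywhere
(`eq_zero_of_vanishing_near`).
-/

open MvPolynomial Matrix

/-- Precomposition of a polynomial in the `2n` variables `(x₁,…,xₙ,y₁,…,yₙ)`
(indexed by `Fin n ⊕ Fin n`) with the linear map given by the matrix `σ`. -/
noncomputable def polyCompMatrix (n : ℕ) (P : MvPolynomial (Fin n ⊕ Fin n) ℝ)
    (σ : Matrix (Fin n ⊕ Fin n) (Fin n ⊕ Fin n) ℝ) : MvPolynomial (Fin n ⊕ Fin n) ℝ :=
  MvPolynomial.aeval (fun i => ∑ l, MvPolynomial.C (σ i l) * MvPolynomial.X l) P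

/-- `Sp(n)ᵈ`: tuples of `2n × 2n` real matrices satisfying `σᵀ J σ = J`, where
`J = [[0, Iₙ], [-Iₙ, 0]]`.  As a subtype of the space of `d`-tuples of matrices,
it carries the product of the subspace topologies. -/
def SpTuple (n d : ℕ) : Type :=
  {τ : Fin d → Matrix (Fin n ⊕ Fin n) (Fin n ⊕ Fin n) ℝ //
    ∀ j : Fin d,
      (τ j)ᵀ * Matrix.fromBlocks 0 1 (-1) 0 * τ j =
        (Matrix.fromBlocks 0 1 (-1) 0 : Matrix (Fin n ⊕ Fin n) (Fin n ⊕ Fin n) ℝ)}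

instance (n d : ℕ) : TopologicalSpace (SpTuple n d) :=
  instTopologicalSpaceSubtype

/-- The set `G_k`: tuples `(σ₁, …, σ_d) ∈ Sp(n)ᵈ` such that
`(F ∘ σ₁, …, F ∘ σ_d)`, with `F = x₁ᵏ`, is a basis of the space of real
homogeneous polynomials of degree `k` in the `2n` variables, i.e. the family is
linearly independent and spans the homogeneous submodule of degree `k`. -/
noncomputable def GkSet (n k d : ℕ) (hn : 1 ≤ n) : Set (SpTuple n d) :=
  {σ : SpTuple n d |
    LinearIndependent ℝ (fun j : Fin d =>
      polyCompMatrix n ((MvPolynomial.X (Sum.inl ⟨0, hn⟩) : MvPolynomial (Fin n ⊕ Fin n) ℝ) ^ k)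
        (σ.1 j)) ∧
    Submodule.span ℝ (Set.range fun j : Fin d =>
      polyCompMatrix n ((MvPolynomial.X (Sum.inl ⟨0, hn⟩) : MvPolynomial (Fin n ⊕ Fin n) ℝ) ^ k)
        (σ.1 j)) = MvPolynomial.homogeneousSubmodule (Fin n ⊕ Fin n) ℝ k}

/-! ### Powers of linear forms and their coefficients -/

lemma pow_mem_homogeneous {κ : Type*} [Fintype κ] (k : ℕ) (a : κ → ℝ) :
    (∑ i, a i • X i : MvPolynomial κ ℝ) ^ k ∈ homogeneousSubmodule κ ℝ k := by
  rw [mem_homogeneousSubmodule]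
  have h : (∑ i, a i • X i : MvPolynomial κ ℝ).IsHomogeneous 1 := by
    refine IsHomogeneous.sum _ _ _ fun i _ => ?_
    exact (homogeneousSubmodule κ ℝ 1).smul_mem _ (isHomogeneous_X ℝ i)
  simpa using h.pow k

section LinearForms

variable {κ : Type*} [Fintype κ] [DecidableEq κ]

/-- The degree-`k` monomials in the variables `κ`, as exponent vectors. -/
abbrev DegMonomials (κ : Type*) [Fintype κ] [DecidableEq κ] (k : ℕ) : Type _ :=
  {m : κ →₀ ℕ // m ∈ (Finset.univ : Finset κ).finsuppAntidiag k}

/-- The vector of degree-`k` coefficients of a polynomial. -/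
noncomputable def degCoeff (κ : Type*) [Fintype κ] [DecidableEq κ] (k : ℕ) :
    MvPolynomial κ ℝ →ₗ[ℝ] (DegMonomials κ k → ℝ) :=
  LinearMap.pi fun m => MvPolynomial.lcoeff ℝ m.1

/-- The degree-`k` coefficients of the `k`-th power of the linear form `∑ aᵢ Xᵢ`, as given by
the multinomial theorem. -/
noncomputable def veronese (k : ℕ) (a : κ → ℝ) : DegMonomials κ k → ℝ :=
  fun m => (m.1.multinomial : ℝ) * m.1.prod fun i e => a i ^ e

lemma degMonomials_sum {k : ℕ} (m : DegMonomials κ k) : (m.1.sum fun _ e => e) = k := by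
  have := (Finset.mem_finsuppAntidiag.1 m.2).1
  rwa [Finsupp.sum_fintype _ _ (fun _ => rfl)]

lemma degCoeff_pow (k : ℕ) (a : κ → ℝ) :
    degCoeff κ k ((∑ i, a i • X i) ^ k) = veronese k a := by
  ext m
  change coeff m.1 _ = _
  rw [coeff_linearCombination_X_pow_of_fintype, if_pos (degMonomials_sum m)]
  rfl

lemma degCoeff_injOn {k : ℕ} {p : MvPolynomial κ ℝ}
    (hp : p ∈ homogeneousSubmodule κ ℝ k) (h : degCoeff κ k p = 0) : p = 0 := by
  ext m
  rw [coeff_zero]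
  by_contra hm
  have hdeg := (mem_homogeneousSubmodule k p).1 hp hm
  have hmem : m ∈ (Finset.univ : Finset κ).finsuppAntidiag k := by
    rw [Finset.mem_finsuppAntidiag]
    refine ⟨?_, Finset.subset_univ _⟩
    rw [← hdeg]
    simp [Finsupp.weight_apply, Finsupp.sum_fintype]
  exact hm (congrFun h ⟨m, hmem⟩)

/-- A family of `dim` many `k`-th powers of linear forms is a basis of the degree-`k` forms iff
the coefficient vectors are linearly independent. -/
lemma basis_iff_veronese {k d : ℕ} (hd : d = Fintype.card (DegMonomials κ k))
    (a : Fin d → κ → ℝ) :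
    (LinearIndependent ℝ (fun j => (∑ i, a j i • X i : MvPolynomial κ ℝ) ^ k) ∧
      Submodule.span ℝ (Set.range fun j => (∑ i, a j i • X i : MvPolynomial κ ℝ) ^ k) =
        homogeneousSubmodule κ ℝ k) ↔
    LinearIndependent ℝ fun j => veronese k (a j) := by
  set f : Fin d → MvPolynomial κ ℝ := fun j => (∑ i, a j i • X i) ^ k with hf
  have hcomp : (fun j => veronese k (a j)) = degCoeff κ k ∘ f := by
    funext j
    exact (degCoeff_pow k (a j)).symm
  have hle : Submodule.span ℝ (Set.range f) ≤ homogeneousSubmodule κ ℝ k := by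
    rw [Submodule.span_le]
    rintro _ ⟨j, rfl⟩
    exact pow_mem_homogeneous k (a j)
  rw [hcomp]
  constructor
  · rintro ⟨hli, -⟩
    refine hli.map ?_
    rw [Submodule.disjoint_def]
    intro p hp hker
    exact degCoeff_injOn (hle hp) hker
  · intro hli
    refine ⟨hli.of_comp, le_antisymm hle fun p hp => ?_⟩
    have htop := hli.span_eq_top_of_card_eq_finrank' (by simp [hd])
    have hmem : degCoeff κ k p ∈ Submodule.span ℝ (Set.range (degCoeff κ k ∘ f)) := by
      rw [htop]; trivial
    rw [Set.range_comp, Submodule.span_image] at hmem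
    obtain ⟨q, hq, hqp⟩ := hmem
    have : p - q = 0 := degCoeff_injOn (sub_mem hp (hle hq)) (by rw [map_sub, hqp, sub_self])
    rwa [sub_eq_zero.1 this]

lemma continuous_veronese (k : ℕ) : Continuous (veronese (κ := κ) k) := by
  unfold veronese Finsupp.prod
  fun_prop

/-- The polynomial on linear forms obtained by pairing the Veronese vector with a functional. -/
noncomputable def veroneseDual {k : ℕ} (φ : (DegMonomials κ k → ℝ) →ₗ[ℝ] ℝ) : MvPolynomial κ ℝ :=
  ∑ m, monomial m.1 ((m.1.multinomial : ℝ) * φ (Pi.single m 1))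

lemma eval_veroneseDual {k : ℕ} (φ : (DegMonomials κ k → ℝ) →ₗ[ℝ] ℝ) (a : κ → ℝ) :
    eval a (veroneseDual φ) = φ (veronese k a) := by
  rw [LinearMap.pi_apply_eq_sum_univ φ, veroneseDual, map_sum]
  refine Finset.sum_congr rfl fun m _ => ?_
  rw [eval_monomial, veronese, smul_eq_mul]
  have : (Pi.single m 1 : DegMonomials κ k → ℝ) = fun j => if m = j then 1 else 0 := by
    ext j; simp [Pi.single_apply, eq_comm]
  rw [this]
  ring

lemma eq_zero_of_veroneseDual_eq_zero {k : ℕ} {φ : (DegMonomials κ k → ℝ) →ₗ[ℝ] ℝ}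
    (h : veroneseDual φ = 0) : φ = 0 := by
  refine LinearMap.pi_ext' fun m => LinearMap.ext_ring ?_
  have hc := congrArg (coeff m.1) h
  rw [veroneseDual, coeff_sum, Finset.sum_eq_single m] at hc
  · have hpos : (m.1.multinomial : ℝ) ≠ 0 := by
      rw [Finsupp.multinomial_eq]
      exact_mod_cast (Nat.multinomial_pos _ _).ne'
    simpa [hpos] using hc
  · intro b _ hb
    rw [coeff_monomial, if_neg fun hbm => hb (Subtype.ext hbm)]
  · simp

end LinearForms

/-! ### Two general lemmas on lines and on choosing independent families -/

/-- A polynomial vanishing at infinitely many points of a line vanishes on the line. -/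
lemma eval_line_eq_zero {κ : Type*} (p : MvPolynomial κ ℝ) (a w : κ → ℝ)
    (h : {t : ℝ | eval (a + t • w) p = 0}.Infinite) (t : ℝ) : eval (a + t • w) p = 0 := by
  set q : Polynomial ℝ :=
    aeval (fun i => Polynomial.C (a i) + Polynomial.X * Polynomial.C (w i)) p with hq
  have hev : ∀ s, q.eval s = eval (a + s • w) p := by
    intro s
    rw [hq, ← Polynomial.coe_aeval_eq_eval, ← AlgHom.comp_apply, comp_aeval, aeval_eq_eval]
    congr 2
    ext i
    simp only [Polynomial.aeval_def, Polynomial.eval₂_add, Polynomial.eval₂_mul, Polynomial.eval₂_C,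
      Polynomial.eval₂_X, Pi.add_apply, Pi.smul_apply, smul_eq_mul,
      Algebra.algebraMap_self, RingHom.id_apply]
  have hq0 : q = 0 := by
    refine Polynomial.eq_zero_of_infinite_isRoot q (h.mono fun s hs => ?_)
    simpa [Polynomial.IsRoot, hev] using hs
  rw [← hev, hq0, Polynomial.eval_zero]

/-- If every `A i` is sent by `f` to a spanning set, then a linearly independent family can be
chosen with its `i`-th member in `f '' A i`: greedily avoid the span of the earlier members. -/
lemma exists_linearIndependent_of_span {X W : Type*} [AddCommGroup W] [Module ℝ W]
    [FiniteDimensional ℝ W] (f : X → W) :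
    ∀ (e : ℕ) (_ : e ≤ Module.finrank ℝ W) (A : Fin e → Set X)
      (_ : ∀ i, Submodule.span ℝ (f '' A i) = ⊤),
      ∃ x : Fin e → X, (∀ i, x i ∈ A i) ∧ LinearIndependent ℝ fun i => f (x i)
  | 0, _, _, _ => ⟨Fin.elim0, fun i => i.elim0, linearIndependent_empty_type⟩
  | e + 1, he, A, hA => by
    obtain ⟨x, hx, hli⟩ := exists_linearIndependent_of_span f e (by omega)
      (fun i => A i.castSucc) (fun i => hA _)
    obtain ⟨y, hy, hyn⟩ : ∃ y ∈ A (Fin.last e),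
        f y ∉ Submodule.span ℝ (Set.range fun i => f (x i)) := by
      by_contra! hcon
      have htop : (⊤ : Submodule ℝ W) ≤ Submodule.span ℝ (Set.range fun i => f (x i)) := by
        rw [← hA (Fin.last e), Submodule.span_le]
        rintro _ ⟨y, hy, rfl⟩
        exact hcon y hy
      have h1 := finrank_range_le_card (R := ℝ) (fun i => f (x i))
      rw [Set.finrank, top_le_iff.1 htop, finrank_top, Fintype.card_fin] at h1
      omega
    refine ⟨Fin.snoc x y, fun i => ?_, ?_⟩
    · refine Fin.lastCases ?_ (fun j => ?_) i
      · simpa using hy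
      · simpa using hx j
    · have hs : (fun i => f ((Fin.snoc x y : Fin (e + 1) → X) i)) =
          (Fin.snoc (fun i => f (x i)) (f y) : Fin (e + 1) → W) := by
        funext i
        refine Fin.lastCases ?_ (fun j => ?_) i <;> simp
      rw [hs]
      exact linearIndependent_finSnoc.2 ⟨hli, hyn⟩

/-! ### Symplectic transvections -/

section Symplectic

variable {n : ℕ}

/-- The matrix `J = [[0, 1], [-1, 0]]` of the standard symplectic form. -/
abbrev sympJ (n : ℕ) : Matrix (Fin n ⊕ Fin n) (Fin n ⊕ Fin n) ℝ :=
  Matrix.fromBlocks 0 1 (-1) 0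

lemma sympJ_mul_self : sympJ n * sympJ n = -1 := by
  simp [sympJ, Matrix.fromBlocks_multiply, ← Matrix.fromBlocks_one, Matrix.fromBlocks_neg]

lemma sympJ_transpose : (sympJ n)ᵀ = -sympJ n := by
  simp [sympJ, Matrix.fromBlocks_transpose, Matrix.fromBlocks_neg]

lemma sympJ_mulVec_mulVec (v : Fin n ⊕ Fin n → ℝ) : sympJ n *ᵥ (sympJ n *ᵥ v) = -v := by
  rw [Matrix.mulVec_mulVec, sympJ_mul_self, Matrix.neg_mulVec, Matrix.one_mulVec]

lemma sympJ_mulVec_dotProduct_self (v : Fin n ⊕ Fin n → ℝ) : (sympJ n *ᵥ v) ⬝ᵥ v = 0 := by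
  have h : (sympJ n *ᵥ v) ⬝ᵥ v = -((sympJ n *ᵥ v) ⬝ᵥ v) := by
    conv_lhs => rw [dotProduct_comm, Matrix.dotProduct_mulVec, ← Matrix.mulVec_transpose,
      sympJ_transpose, Matrix.neg_mulVec, neg_dotProduct]
  linarith

/-- The symplectic transvection acting on row vectors by `r ↦ r + t (r ⬝ Jv) v`. -/
noncomputable def transv (v : Fin n ⊕ Fin n → ℝ) (t : ℝ) :
    Matrix (Fin n ⊕ Fin n) (Fin n ⊕ Fin n) ℝ :=
  1 + t • Matrix.vecMulVec (sympJ n *ᵥ v) v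

lemma transv_symplectic (v : Fin n ⊕ Fin n → ℝ) (t : ℝ) :
    (transv v t)ᵀ * sympJ n * transv v t = sympJ n := by
  have h1 : (sympJ n *ᵥ v) ᵥ* sympJ n = v := by
    rw [← Matrix.mulVec_transpose, sympJ_transpose, Matrix.neg_mulVec, sympJ_mulVec_mulVec,
      neg_neg]
  have h2 : v ⬝ᵥ (sympJ n *ᵥ v) = 0 := by
    rw [dotProduct_comm, sympJ_mulVec_dotProduct_self]
  have h3 : (transv v t)ᵀ * sympJ n = sympJ n + t • Matrix.vecMulVec v v := by
    rw [transv, Matrix.transpose_add, Matrix.transpose_one, Matrix.transpose_smul,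
      Matrix.transpose_vecMulVec, add_mul, one_mul, Matrix.smul_mul, Matrix.vecMulVec_mul, h1]
  rw [h3, transv, mul_add, mul_one, Matrix.mul_smul, Matrix.mul_vecMulVec, Matrix.add_mulVec,
    sympJ_mulVec_mulVec, Matrix.smul_mulVec, Matrix.vecMulVec_mulVec, h2]
  simp [Matrix.neg_vecMulVec]

lemma row_mul_transv (σ : Matrix (Fin n ⊕ Fin n) (Fin n ⊕ Fin n) ℝ) (v : Fin n ⊕ Fin n → ℝ)
    (t : ℝ) (i : Fin n ⊕ Fin n) :
    (σ * transv v t) i = σ i + t • ((σ i ⬝ᵥ (sympJ n *ᵥ v)) • v) := by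
  have : (σ * transv v t) i = σ i ᵥ* transv v t := by
    ext j; rfl
  rw [this, transv, Matrix.vecMul_add, Matrix.vecMul_one, Matrix.vecMul_smul,
    Matrix.vecMul_vecMulVec]

lemma row_ne_zero {σ : Matrix (Fin n ⊕ Fin n) (Fin n ⊕ Fin n) ℝ}
    (hσ : σᵀ * sympJ n * σ = sympJ n) (i : Fin n ⊕ Fin n) : σ i ≠ 0 := by
  intro h0
  have hinv : (-(sympJ n) * σᵀ * sympJ n) * σ = 1 := by
    rw [mul_assoc, mul_assoc, ← mul_assoc σᵀ, hσ, neg_mul, sympJ_mul_self, neg_neg]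
  have h1 := congrArg (fun M => M i i) (mul_eq_one_comm.1 hinv)
  simp only [Matrix.mul_apply (M := σ)] at h1
  simp [h0] at h1

/-- A polynomial vanishing on the `i`-th rows of all symplectic matrices near a given one is zero:
transvections move the row along lines, first locally and hence globally, and they reach every
row outside a hyperplane. -/
lemma eq_zero_of_vanishing_near (p : MvPolynomial (Fin n ⊕ Fin n) ℝ)
    {σ : Matrix (Fin n ⊕ Fin n) (Fin n ⊕ Fin n) ℝ} (hσ : σᵀ * sympJ n * σ = sympJ n)
    (i : Fin n ⊕ Fin n) {U : Set (Matrix (Fin n ⊕ Fin n) (Fin n ⊕ Fin n) ℝ)} (hU : IsOpen U)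
    (hσU : σ ∈ U) (h : ∀ τ ∈ U, τᵀ * sympJ n * τ = sympJ n → eval (τ i) p = 0) : p = 0 := by
  have hline : ∀ (v : Fin n ⊕ Fin n → ℝ) (t : ℝ),
      eval (σ i + t • ((σ i ⬝ᵥ (sympJ n *ᵥ v)) • v)) p = 0 := by
    intro v
    refine eval_line_eq_zero p _ _ ?_
    have hcont : Continuous fun t : ℝ => σ * transv v t := by
      unfold transv
      fun_prop
    have hnhds : {t : ℝ | σ * transv v t ∈ U} ∈ nhds (0 : ℝ) :=
      (hU.preimage hcont).mem_nhds (by simpa [transv] using hσU)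
    refine (infinite_of_mem_nhds 0 hnhds).mono fun t ht => ?_
    rw [Set.mem_ofPred_eq, ← row_mul_transv]
    refine h _ ht ?_
    calc (σ * transv v t)ᵀ * sympJ n * (σ * transv v t)
        = (transv v t)ᵀ * (σᵀ * sympJ n * σ) * transv v t := by
          rw [Matrix.transpose_mul]; simp only [mul_assoc]
      _ = sympJ n := by rw [hσ, transv_symplectic]
  have hgen : ∀ w : Fin n ⊕ Fin n → ℝ, σ i ⬝ᵥ (sympJ n *ᵥ w) ≠ 0 → eval (σ i + w) p = 0 := by
    intro w hw
    have := hline w (σ i ⬝ᵥ (sympJ n *ᵥ w))⁻¹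
    rwa [smul_smul, inv_mul_cancel₀ hw, one_smul] at this
  -- `u = -J r` is a direction transverse to the hyperplane `r ⬝ Jw = 0`, where `r` is the row.
  set u : Fin n ⊕ Fin n → ℝ := -(sympJ n *ᵥ σ i) with hu
  have hru : σ i ⬝ᵥ (sympJ n *ᵥ u) ≠ 0 := by
    rw [hu, Matrix.mulVec_neg, sympJ_mulVec_mulVec, neg_neg]
    exact fun h0 => row_ne_zero hσ i (dotProduct_self_eq_zero.1 h0)
  refine MvPolynomial.funext fun a => ?_
  rw [map_zero]
  have key := eval_line_eq_zero p a u ?_ 0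
  · simpa using key
  set c := σ i ⬝ᵥ (sympJ n *ᵥ (a - σ i)) with hc
  refine (Set.finite_singleton (-c / (σ i ⬝ᵥ (sympJ n *ᵥ u)))).infinite_compl.mono fun s hs => ?_
  have hw := hgen (a - σ i + s • u) (by
    rw [Matrix.mulVec_add, Matrix.mulVec_smul, dotProduct_add, dotProduct_smul, ← hc, smul_eq_mul]
    intro h0
    exact hs (by rw [Set.mem_singleton_iff, eq_div_iff hru]; linarith))
  have he : σ i + (a - σ i + s • u) = a + s • u := by abel
  rwa [he] at hw

/-- Near any symplectic matrix, the Veronese vectors of the `i`-th rows of symplectic matrices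
span the whole space. -/
lemma span_veronese_near (k : ℕ)
    {σ : Matrix (Fin n ⊕ Fin n) (Fin n ⊕ Fin n) ℝ} (hσ : σᵀ * sympJ n * σ = sympJ n)
    (i : Fin n ⊕ Fin n) {U : Set (Matrix (Fin n ⊕ Fin n) (Fin n ⊕ Fin n) ℝ)} (hU : IsOpen U)
    (hσU : σ ∈ U) :
    Submodule.span ℝ ((fun τ : Matrix (Fin n ⊕ Fin n) (Fin n ⊕ Fin n) ℝ => veronese k (τ i)) ''
      {τ | τ ∈ U ∧ τᵀ * sympJ n * τ = sympJ n}) = ⊤ := by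
  by_contra hne
  obtain ⟨φ, hφ, hle⟩ := Submodule.exists_le_ker_of_lt_top _ (lt_top_iff_ne_top.2 hne)
  refine hφ (eq_zero_of_veroneseDual_eq_zero ?_)
  refine eq_zero_of_vanishing_near _ hσ i hU hσU fun τ hτ hs => ?_
  rw [eval_veroneseDual]
  exact hle (Submodule.subset_span ⟨τ, ⟨hτ, hs⟩, rfl⟩)

end Symplectic

/-! ### The set `G_k` -/

lemma mem_GkSet_iff {n k d : ℕ} (hn : 1 ≤ n) (hd : d = (2 * n - 1 + k).choose k)
    (σ : SpTuple n d) :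
    σ ∈ GkSet n k d hn ↔
      LinearIndependent ℝ fun j => veronese k (σ.1 j (Sum.inl ⟨0, hn⟩)) := by
  have hcard : d = Fintype.card (DegMonomials (Fin n ⊕ Fin n) k) := by
    rw [Fintype.card_coe, Finset.card_finsuppAntidiag_nat_eq_choose, hd]
    congr 1
    simp
    omega
  rw [← basis_iff_veronese hcard]
  simp only [GkSet, Set.mem_ofPred_eq, polyCompMatrix, map_pow, aeval_X, smul_eq_C_mul]

theorem Gk_open_and_dense (n k d : ℕ) (hn : 1 ≤ n) (hk : 1 ≤ k)
    (hd : d = (2 * n - 1 + k).choose k) :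
    IsOpen (GkSet n k d hn) ∧ Dense (GkSet n k d hn) := by
  have hcard : Module.finrank ℝ (DegMonomials (Fin n ⊕ Fin n) k → ℝ) = d := by
    rw [Module.finrank_fintype_fun_eq_card, Fintype.card_coe,
      Finset.card_finsuppAntidiag_nat_eq_choose, hd]
    congr 1
    simp
    omega
  constructor
  · have heq : GkSet n k d hn =
        (fun (σ : SpTuple n d) (j : Fin d) => veronese k (σ.1 j (Sum.inl ⟨0, hn⟩))) ⁻¹'
          {f | LinearIndependent ℝ f} := by
      ext σ
      exact mem_GkSet_iff hn hd σ
    rw [heq]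
    refine isOpen_setOfPred_linearIndependent.preimage (continuous_pi fun j => ?_)
    refine (continuous_veronese k).comp ?_
    have h1 : Continuous fun σ : SpTuple n d => σ.1 := continuous_subtype_val
    exact (continuous_apply (Sum.inl ⟨0, hn⟩)).comp ((continuous_apply j).comp h1)
  · rw [dense_iff_inter_open]
    rintro O hO ⟨σ, hσO⟩
    obtain ⟨O', hO', rfl⟩ := isOpen_induced_iff.1 hO
    obtain ⟨U, hU, hUO⟩ := isOpen_pi_iff'.1 hO' σ.1 hσO
    obtain ⟨x, hx, hli⟩ := exists_linearIndependent_of_span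
      (fun τ : Matrix (Fin n ⊕ Fin n) (Fin n ⊕ Fin n) ℝ => veronese k (τ (Sum.inl ⟨0, hn⟩)))
      d hcard.ge (fun j => {τ | τ ∈ U j ∧ τᵀ * sympJ n * τ = sympJ n})
      (fun j => span_veronese_near k (σ.2 j) _ (hU j).1 (hU j).2)
    let σ' : SpTuple n d := ⟨x, fun j => (hx j).2⟩
    exact ⟨σ', hUO fun j _ => (hx j).1, (mem_GkSet_iff hn hd σ').2 hli⟩
end

section
/- For every n ≥ 1 and k ≥ 1, with d = binom(2n-1+k, k) and F(x_1,…,x_n,y_1,…,y_n) = x_1^k, there exist symplectic matrices σ_1, …, σ_d ∈ Sp(n) such that the d polynomials F∘σ_1, …, F∘σ_d form a basis of the space of real homogeneous polynomials of degree k in the 2n variables (x_1,…,x_n,y_1,…,y_n). In other words, the set G_k is nonempty. -/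
/-!
The polynomial `F ∘ σ` is the `k`-th power of the linear form `L_a = ∑ aₗ Xₗ`, where `a` is the
row of `σ` indexed by `x₁`.

* Every `a` whose `y₁`-coordinate is nonzero is such a row: with `u = a - e_{x₁}`, the transposed
  symplectic transvection `1 + (1 / a_{y₁}) (J u) uᵀ` is symplectic and has `a` as its first row
  (`exists_symplectic_row`).
* The powers `L_a ^ k`, with all coordinates of `a` nonzero, span the homogeneous polynomials of
  degree `k`. Indeed, if a linear functional `φ` kills all of them, then the multinomial theorem
  says that the polynomial `∑_m (k choose m) φ(X^m) a^m` in `a` vanishes on a box with infinite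
  sides, so all its coefficients vanish; as multinomial coefficients are nonzero in
  characteristic zero, `φ(X^m) = 0` for every monomial of degree `k`
  (`span_linearForm_pow`).

The `d` matrices come from a basis extracted from this spanning family, `d` being the number of
monomials of degree `k` (`finrank_homogeneousSubmodule`).
-/

open MvPolynomial Matrix

/-- The linear form `∑ aₗ Xₗ` with coefficient vector `a`. -/
noncomputable def linearForm {ι : Type*} [Fintype ι] (a : ι → ℝ) : MvPolynomial ι ℝ :=
  ∑ l, C (a l) * X l

lemma linearForm_pow {ι : Type*} [Fintype ι] [DecidableEq ι] (a : ι → ℝ) (k : ℕ) :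
    linearForm a ^ k = ∑ m ∈ Finset.piAntidiag Finset.univ k,
      ((Nat.multinomial Finset.univ m : ℝ) * ∏ i, a i ^ m i) •
        monomial (Finsupp.equivFunOnFinite.symm m) (1 : ℝ) := by
  rw [linearForm, Finset.sum_pow_eq_sum_piAntidiag]
  refine Finset.sum_congr rfl fun m _ => ?_
  rw [MvPolynomial.smul_eq_C_mul, MvPolynomial.monomial_eq, Finsupp.prod_fintype _ _ (by simp)]
  simp [mul_pow, Finset.prod_mul_distrib, mul_assoc]

lemma linearForm_isHomogeneous {ι : Type*} [Fintype ι] (a : ι → ℝ) :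
    (linearForm a).IsHomogeneous 1 :=
  IsHomogeneous.sum _ _ _ fun l _ => by
    simpa using (isHomogeneous_C ι (a l)).mul (isHomogeneous_X ℝ l)

/-- A linear functional vanishing on all `k`-th powers of linear forms with nonzero coefficients
vanishes on the monomials of degree `k`. -/
lemma functional_monomial_eq_zero {ι : Type*} [Fintype ι] [DecidableEq ι] (k : ℕ)
    (φ : MvPolynomial ι ℝ →ₗ[ℝ] ℝ)
    (hφ : ∀ a : ι → ℝ, (∀ i, a i ≠ 0) → φ (linearForm a ^ k) = 0)
    (m : ι →₀ ℕ) (hm : m.degree = k) : φ (monomial m 1) = 0 := by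
  -- `q` is the polynomial in the coefficients `a` whose value at `a` is `φ (linearForm a ^ k)`.
  set q : MvPolynomial ι ℝ := ∑ m ∈ Finset.piAntidiag Finset.univ k,
    monomial (Finsupp.equivFunOnFinite.symm m) ((Nat.multinomial Finset.univ m : ℝ) *
      φ (monomial (Finsupp.equivFunOnFinite.symm m) 1)) with hq
  have hinf : ({0}ᶜ : Set ℝ).Infinite := (Set.finite_singleton 0).infinite_compl
  have hq0 : q = 0 := by
    refine funext_set (fun _ => ({0}ᶜ : Set ℝ)) (fun _ => hinf) fun a ha => ?_
    rw [map_zero, ← hφ a fun i => ha i trivial, linearForm_pow, map_sum, map_sum]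
    refine Finset.sum_congr rfl fun m _ => ?_
    rw [eval_monomial, Finsupp.prod_fintype _ _ (by simp), map_smul, smul_eq_mul]
    simp only [Finsupp.equivFunOnFinite_symm_apply_apply]
    ring
  have hmem : (m : ι → ℕ) ∈ Finset.piAntidiag Finset.univ k := by
    simp [Finset.mem_piAntidiag, ← hm, Finsupp.degree_eq_sum]
  have hc : coeff m q = (Nat.multinomial Finset.univ m : ℝ) * φ (monomial m 1) := by
    rw [hq, coeff_sum, Finset.sum_eq_single_of_mem _ hmem]
    · simp
    · intro b _ hb
      rw [coeff_monomial, if_neg]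
      rintro rfl
      exact hb (by simp)
  rw [hq0, coeff_zero] at hc
  exact (mul_eq_zero.mp hc.symm).resolve_left
    (Nat.cast_ne_zero.mpr (Nat.multinomial_pos _ _).ne')

lemma span_linearForm_pow {ι : Type*} [Fintype ι] (k : ℕ) :
    Submodule.span ℝ ((fun a : ι → ℝ => linearForm a ^ k) '' {a | ∀ i, a i ≠ 0}) =
      homogeneousSubmodule ι ℝ k := by
  classical
  apply le_antisymm
  · rw [Submodule.span_le]
    rintro _ ⟨a, -, rfl⟩
    simpa using (linearForm_isHomogeneous a).pow k
  · intro p hp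
    rw [← support_sum_monomial_coeff p]
    refine Submodule.sum_mem _ fun m hm => ?_
    have hdeg : m.degree = k := by
      rw [Finsupp.degree_eq_weight_one]
      exact hp (mem_support_iff.mp hm)
    rw [← mul_one (coeff m p), ← smul_eq_mul, ← smul_monomial]
    refine Submodule.smul_mem _ _ ?_
    by_contra hnot
    obtain ⟨φ, hφ, hker⟩ := Submodule.exists_le_ker_of_notMem hnot
    exact hφ (functional_monomial_eq_zero k φ
      (fun a ha => hker (Submodule.subset_span ⟨a, ha, rfl⟩)) m hdeg)

lemma finrank_homogeneousSubmodule {ι : Type*} [Fintype ι] (k : ℕ) :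
    Module.finrank ℝ (homogeneousSubmodule ι ℝ k) = (Fintype.card ι + k - 1).choose k := by
  classical
  have hset : {m : ι →₀ ℕ | m.degree = k} = ↑(Finset.univ.finsuppAntidiag k : Finset (ι →₀ ℕ)) := by
    ext m
    simp [Finset.mem_finsuppAntidiag, Finsupp.degree_eq_sum]
  rw [homogeneousSubmodule_eq_finsupp_supported, hset,
    (AddMonoidAlgebra.supportedEquivFinsupp _).finrank_eq, Module.finrank_finsupp_self]
  simp [Finset.card_finsuppAntidiag_nat_eq_choose]

/-- Any vector with nonzero coordinate `inr i` is the row `inl i` of a symplectic matrix, namely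
of a transposed symplectic transvection. -/
lemma exists_symplectic_row {ι : Type*} [Fintype ι] [DecidableEq ι] (i : ι) (a : ι ⊕ ι → ℝ)
    (ha : a (Sum.inr i) ≠ 0) :
    ∃ σ : Matrix (ι ⊕ ι) (ι ⊕ ι) ℝ,
      σᵀ * Matrix.fromBlocks 0 1 (-1) 0 * σ = Matrix.fromBlocks 0 1 (-1) 0 ∧
      σ (Sum.inl i) = a := by
  set J : Matrix (ι ⊕ ι) (ι ⊕ ι) ℝ := Matrix.fromBlocks 0 1 (-1) 0 with hJ
  have hJT : Jᵀ = -J := by simp [hJ, Matrix.fromBlocks_transpose, Matrix.fromBlocks_neg]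
  have hJJ : J * J = -1 := by
    simp [hJ, Matrix.fromBlocks_multiply, ← Matrix.fromBlocks_one, Matrix.fromBlocks_neg]
  set u : ι ⊕ ι → ℝ := a - Pi.single (Sum.inl i) 1 with hu
  set w : ι ⊕ ι → ℝ := J *ᵥ u with hw
  have hJw : J *ᵥ w = -u := by simp [hw, hJJ, Matrix.neg_mulVec]
  have hwJ : w ᵥ* J = u := by
    rw [← Matrix.mulVec_transpose, hJT, Matrix.neg_mulVec, hJw, neg_neg]
  have hww : w ⬝ᵥ u = 0 := by
    have h : w ⬝ᵥ u = -(u ⬝ᵥ w) := by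
      conv_lhs => rw [← hwJ]
      rw [dotProduct_comm, ← Matrix.dotProduct_mulVec, hJw, dotProduct_neg, dotProduct_comm]
    rw [dotProduct_comm u w] at h
    linarith
  have huuw : Matrix.vecMulVec u u *ᵥ w = 0 := by
    rw [Matrix.vecMulVec_mulVec, dotProduct_comm, hww, MulOpposite.op_zero, zero_smul]
  set c : ℝ := (a (Sum.inr i))⁻¹ with hc
  refine ⟨1 + c • Matrix.vecMulVec w u, ?_, ?_⟩
  · simp only [Matrix.transpose_add, Matrix.transpose_one, Matrix.transpose_smul,
      Matrix.transpose_vecMulVec, add_mul, mul_add, one_mul, mul_one, Matrix.smul_mul,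
      Matrix.mul_smul, Matrix.vecMulVec_mul, Matrix.mul_vecMulVec, hJw, hwJ,
      Matrix.smul_mulVec, huuw, Matrix.zero_vecMulVec, smul_zero, Matrix.neg_vecMulVec, smul_neg]
    abel
  · have hwi : w (Sum.inl i) = a (Sum.inr i) := by
      simp [hw, hJ, Matrix.mulVec, dotProduct, hu, Matrix.one_apply]
    funext l
    simp only [Matrix.add_apply, Matrix.smul_apply, Matrix.vecMulVec_apply, hwi, smul_eq_mul, hu,
      Pi.sub_apply, hc]
    rw [← mul_assoc, inv_mul_cancel₀ ha, Matrix.one_apply, Pi.single_apply]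
    simp [eq_comm]

lemma polyCompMatrix_X_pow (n k : ℕ) (i : Fin n ⊕ Fin n)
    (σ : Matrix (Fin n ⊕ Fin n) (Fin n ⊕ Fin n) ℝ) :
    polyCompMatrix n (X i ^ k) σ = linearForm (σ i) ^ k := by
  simp [polyCompMatrix, linearForm]

theorem Gk_nonempty (n k : ℕ) (hn : 1 ≤ n) (hk : 1 ≤ k) (d : ℕ)
    (hd : d = (2 * n - 1 + k).choose k) :
    ∃ σ : Fin d → Matrix (Fin n ⊕ Fin n) (Fin n ⊕ Fin n) ℝ,
      (∀ j : Fin d,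
        (σ j)ᵀ * Matrix.fromBlocks 0 1 (-1) 0 * σ j =
          (Matrix.fromBlocks 0 1 (-1) 0 : Matrix (Fin n ⊕ Fin n) (Fin n ⊕ Fin n) ℝ)) ∧
      LinearIndependent ℝ (fun j : Fin d =>
        polyCompMatrix n
          ((MvPolynomial.X (Sum.inl ⟨0, hn⟩) : MvPolynomial (Fin n ⊕ Fin n) ℝ) ^ k) (σ j)) ∧
      Submodule.span ℝ (Set.range fun j : Fin d =>
        polyCompMatrix n
          ((MvPolynomial.X (Sum.inl ⟨0, hn⟩) : MvPolynomial (Fin n ⊕ Fin n) ℝ) ^ k) (σ j)) =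
        MvPolynomial.homogeneousSubmodule (Fin n ⊕ Fin n) ℝ k := by
  set S : Set (MvPolynomial (Fin n ⊕ Fin n) ℝ) :=
    (fun a : Fin n ⊕ Fin n → ℝ => linearForm a ^ k) '' {a | ∀ i, a i ≠ 0} with hS
  have hspan : Submodule.span ℝ S = homogeneousSubmodule (Fin n ⊕ Fin n) ℝ k :=
    span_linearForm_pow k
  have hfin : Module.finrank ℝ (Submodule.span ℝ S) = d := by
    rw [hspan, finrank_homogeneousSubmodule, hd, Fintype.card_sum, Fintype.card_fin]
    congr 1
    omega
  have : Module.Finite ℝ (Submodule.span ℝ S) := by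
    rw [hspan]
    exact Module.Finite.of_fg (homogeneousSubmodule_fg _ _ k)
  subst hfin
  obtain ⟨f, hfS, hfspan, hfli⟩ := Submodule.exists_fun_fin_finrank_span_eq ℝ S
  choose a ha haf using hfS
  choose σ hσ hrow using fun j =>
    exists_symplectic_row (⟨0, hn⟩ : Fin n) (a j) (ha j (Sum.inr ⟨0, hn⟩))
  have hf : (fun j => polyCompMatrix n (X (Sum.inl ⟨0, hn⟩) ^ k) (σ j)) = f := by
    funext j
    rw [polyCompMatrix_X_pow, hrow]
    exact haf j
  refine ⟨σ, hσ, ?_, ?_⟩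
  · rw [hf]
    exact hfli
  · rw [hf, hfspan, hspan]
end

section
/- Let n ≥ 2 and let a_2, …, a_{2n} be arbitrary real numbers. Define n×n matrices A and B as follows: A agrees with the identity matrix except that its first row is (1, a_2, …, a_n); B has (1,1)-entry a_{n+1}, first row (a_{n+1}, a_{n+2}, …, a_{2n}), first column (a_{n+1}, b_2, …, b_n) with b_i = a_{n+i} - a_i for i = 2, …, n, and lower-right (n-1)×(n-1) block equal to the identity (all other entries zero). Then A is invertible, the matrix A⁻¹B is symmetric, and consequently the 2n×2n block matrix σ = [[A, B],[0, (A⁻¹)ᵀ]] is symplectic, i.e., σᵀJσ = J. -/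
/-!
Write `A = 1 + e₀ cᵀ` with `c = (0, a₂, …, aₙ)`. Since `cᵀ e₀ = 0`, the inverse of `A` is
`1 - e₀ cᵀ`, i.e. `A` with the signs of the `aᵢ` flipped. Left multiplication by it changes only
the first row of `B`, whose `i`-th entry becomes `a_{n+i} - a_i = b_i` for `i ≥ 2`, which is the
`i`-th entry of the first column; hence `A⁻¹ B` is symmetric. The symplectic identity is then a
block computation, valid for every invertible `A` with `A⁻¹ B` symmetric.
-/

open Matrix

/-- For invertible `A`, symmetry of `A⁻¹ B` makes the block upper triangular matrix symplectic:
the only nontrivial block of the product is `-A⁻¹ B + (A⁻¹ B)ᵀ`. -/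
lemma fromBlocks_symplectic_of_isSymm {ι : Type*} [Fintype ι] [DecidableEq ι]
    (A B : Matrix ι ι ℝ) (hA : IsUnit A) (hS : (A⁻¹ * B).IsSymm) :
    (fromBlocks A B 0 A⁻¹ᵀ)ᵀ * fromBlocks 0 1 (-1) 0 * fromBlocks A B 0 A⁻¹ᵀ =
      (fromBlocks 0 1 (-1) 0 : Matrix (ι ⊕ ι) (ι ⊕ ι) ℝ) := by
  have hdet : IsUnit A.det := (isUnit_iff_isUnit_det A).1 hA
  have h1 : A⁻¹ * A = 1 := nonsing_inv_mul A hdet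
  have h2 : Aᵀ * A⁻¹ᵀ = 1 := by rw [← transpose_mul, h1, transpose_one]
  have h3 : Bᵀ * A⁻¹ᵀ = A⁻¹ * B := by rw [← transpose_mul]; exact hS
  simp only [fromBlocks_transpose, fromBlocks_multiply, transpose_zero, transpose_transpose,
    Matrix.mul_zero, Matrix.zero_mul, Matrix.mul_one, Matrix.mul_neg, Matrix.neg_mul, zero_add,
    add_zero, neg_zero, h1, h2, h3, neg_add_cancel]

theorem explicit_matrices_symplectic (n : ℕ) (hn : 2 ≤ n) (a : ℕ → ℝ)
    (A B : Matrix (Fin n) (Fin n) ℝ)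
    (hAdef : A = Matrix.of fun i j : Fin n =>
      if i.val = 0 then (if j.val = 0 then 1 else a (j.val + 1))
      else if i = j then 1 else 0)
    (hBdef : B = Matrix.of fun i j : Fin n =>
      if i.val = 0 then a (n + 1 + j.val)
      else if j.val = 0 then a (n + i.val + 1) - a (i.val + 1)
      else if i = j then 1 else 0) :
    IsUnit A ∧ (A⁻¹ * B).IsSymm ∧
      (Matrix.fromBlocks A B 0 A⁻¹ᵀ)ᵀ * Matrix.fromBlocks 0 1 (-1) 0 *
          Matrix.fromBlocks A B 0 A⁻¹ᵀ =
        (Matrix.fromBlocks 0 1 (-1) 0 : Matrix (Fin n ⊕ Fin n) (Fin n ⊕ Fin n) ℝ) := by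
  obtain ⟨m, rfl⟩ : ∃ m, n = m + 1 := ⟨n - 1, by omega⟩
  -- the inverse of `A`
  let C : Matrix (Fin (m + 1)) (Fin (m + 1)) ℝ := Matrix.of fun i j =>
    if i.val = 0 then (if j.val = 0 then 1 else - a (j.val + 1))
    else if i = j then 1 else 0
  have hAC : A * C = 1 := by
    ext i j
    rw [Matrix.mul_apply, Fin.sum_univ_succ, hAdef]
    refine Fin.cases ?_ (fun i => ?_) i <;> refine Fin.cases ?_ (fun j => ?_) j <;>
      simp [C, Matrix.one_apply, Fin.succ_ne_zero, (Fin.succ_ne_zero _).symm]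
  have hA : IsUnit A := IsUnit.of_mul_eq_one C hAC
  have hinv : A⁻¹ = C := inv_eq_right_inv hAC
  have hS : (A⁻¹ * B).IsSymm := by
    rw [hinv]
    refine IsSymm.ext fun i j => ?_
    rw [Matrix.mul_apply, Matrix.mul_apply, Fin.sum_univ_succ, Fin.sum_univ_succ, hBdef]
    refine Fin.cases ?_ (fun i => ?_) i <;> refine Fin.cases ?_ (fun j => ?_) j <;>
      simp [C, Fin.succ_ne_zero, eq_comm]
    -- the first row against the first column, up to the order of summation in the indices of `a`
    all_goals rw [add_right_comm (m + 1) _ 1, sub_eq_add_neg]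
  exact ⟨hA, hS, fromBlocks_symplectic_of_isSymm A B hA hS⟩
end
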